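/- Suppose p is a condition in the poset P and F : N^k → N is a function definable in N (with parameters). Then there exists a condition q ≤ p with n_q = n_p such that for every tuple (σ, σ₁, …, σ_k) of elements of 2^{n_q} with σ distinct from each of σ₁, …, σ_k, there is some i < ω with q ⊢ (x_σ)_i ≠ (F(x_{σ₁}, …, x_{σ_k}))_i, where (y)_i denotes the i-th binary digit of y. -/

import Mathlib

open FirstOrder FirstOrder.Language

/-- Function symbols of the language of arithmetic: `0`, `1`, `+`, `·`. -/
inductive arithFunc : ℕ → Type
  | zero : arithFunc 0
  | one : arithFunc 0
  | add : arithFunc 2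
  | mul : arithFunc 2
  deriving DecidableEq

/-- Relation symbols of the language of arithmetic: `<`. -/
inductive arithRel : ℕ → Type
  | lt : arithRel 2
  deriving DecidableEq

/-- The first-order language of arithmetic `{0, 1, +, ·, <}`. -/
def arith : FirstOrder.Language := ⟨arithFunc, arithRel⟩

namespace Arith

variable {M : Type*} [arith.Structure M]

/-- The interpretation of `0`. -/
def zeroM (M : Type*) [arith.Structure M] : M :=
  Structure.funMap (L := arith) arithFunc.zero ![]

/-- The interpretation of `1`. -/
def oneM (M : Type*) [arith.Structure M] : M :=
  Structure.funMap (L := arith) arithFunc.one ![]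

/-- The interpretation of `+`. -/
def addM (x y : M) : M := Structure.funMap (L := arith) arithFunc.add ![x, y]

/-- The interpretation of `·`. -/
def mulM (x y : M) : M := Structure.funMap (L := arith) arithFunc.mul ![x, y]

/-- The interpretation of `<`. -/
def ltM (x y : M) : Prop := Structure.RelMap (L := arith) arithRel.lt ![x, y]

/-- Non-strict order. -/
def leM (x y : M) : Prop := ltM x y ∨ x = y

/-- The numeral `n` in `M`: `0`, or `1 + 1 + ⋯ + 1`. -/
def numeral (M : Type*) [arith.Structure M] : ℕ → M
  | 0 => zeroM M
  | n + 1 => addM (numeral M n) (oneM M)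

/-- The standard `arith`-structure on `ℕ`. -/
instance : arith.Structure ℕ where
  funMap {n} f v :=
    match f with
    | .zero => 0
    | .one => 1
    | .add => v 0 + v 1
    | .mul => v 0 * v 1
  RelMap {n} r v :=
    match r with
    | .lt => v 0 < v 1

/-- `M` is a model of Peano arithmetic: it satisfies the finitely many basic axioms of
`PA` together with induction for all parametrically definable sets (which is equivalent
to the usual first-order induction scheme). -/
def IsPAModel (M : Type*) [arith.Structure M] : Prop :=
  (∀ x : M, addM x (zeroM M) = x) ∧
  (∀ x y : M, addM x (addM y (oneM M)) = addM (addM x y) (oneM M)) ∧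
  (∀ x : M, mulM x (zeroM M) = zeroM M) ∧
  (∀ x y : M, mulM x (addM y (oneM M)) = addM (mulM x y) x) ∧
  (∀ x : M, ¬ ltM x (zeroM M)) ∧
  (∀ x y : M, ltM x (addM y (oneM M)) ↔ (ltM x y ∨ x = y)) ∧
  (∀ x : M, addM x (oneM M) ≠ zeroM M) ∧
  (∀ x y : M, addM x (oneM M) = addM y (oneM M) → x = y) ∧
  (∀ s : Set M, Set.Definable₁ (Set.univ : Set M) arith s →
    zeroM M ∈ s → (∀ x ∈ s, addM x (oneM M) ∈ s) → ∀ x : M, x ∈ s)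

/-- An element of `M` is standard if it is a numeral. -/
def IsStd (x : M) : Prop := ∃ n : ℕ, x = numeral M n

/-- `M` is a non-standard model of `PA`: a model of `PA` not isomorphic to the standard
model `ℕ`. -/
def NonstandardModel (M : Type*) [arith.Structure M] : Prop :=
  IsPAModel M ∧ ¬ Nonempty (M ≃[arith] ℕ)

/-- `(x)_i = 1`: the `i`-th binary digit of `x` is `1`, for standard `i`.  This is expressed
by saying that `x = u·2^(i+1) + (2^i + v)` with `v < 2^i`, where `2^i`, `2^(i+1)` are
numerals. -/
def digitB (x : M) (i : ℕ) : Prop :=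
  ∃ u v : M, x = addM (mulM u (numeral M (2 ^ (i + 1)))) (addM (numeral M (2 ^ i)) v) ∧
    ltM v (numeral M (2 ^ i))

/-- The standard system of `M`: the collection of subsets of `ℕ` coded by some
non-standard element of `M` (via its standard binary digits). -/
def SSy (M : Type*) [arith.Structure M] : Set (Set ℕ) :=
  {X | ∃ a : M, ¬ IsStd a ∧ ∀ i : ℕ, i ∈ X ↔ digitB a i}

/-- A function `M → M` is definable (with parameters) if its graph is a definable set. -/
def DefinableFun₁ (f : M → M) : Prop :=
  Set.Definable (Set.univ : Set M) arith {v : Fin 2 → M | f (v 0) = v 1}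

/-- A `k`-ary function `M^k → M` is definable (with parameters) if its graph is a
definable set. -/
def DefinableFun {k : ℕ} (F : (Fin k → M) → M) : Prop :=
  Set.Definable (Set.univ : Set M) arith
    {v : Fin (k + 1) → M | F (fun i => v i.castSucc) = v (Fin.last k)}

/-- `c` is the internal cardinality of the set `D ⊆ M`: there is an `M`-definable
bijection between `{x : x < c}` and `D`. -/
def InternalCard (D : Set M) (c : M) : Prop :=
  ∃ f : M → M, DefinableFun₁ f ∧ Set.BijOn f {x : M | ltM x c} D

/-- `y = 2^x` in the model `M`, expressed via the existence of a definable function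
satisfying the recursion of the base-`2` exponential up to `x`. -/
def IsPow2 (x y : M) : Prop :=
  ∃ f : M → M, DefinableFun₁ f ∧ f (zeroM M) = oneM M ∧
    (∀ z : M, ltM z x → f (addM z (oneM M)) = addM (f z) (f z)) ∧ f x = y

end Arith

namespace Arith

variable {N : Type*} [arith.Structure N]

/-- Formulas with constants for all elements of `N`, in free variables `x_σ` indexed by
binary sequences `σ ∈ 2^n`. -/
abbrev CFormula (N : Type*) [arith.Structure N] (n : ℕ) : Type _ :=
  (arith[[N]]).Formula (Fin n → Bool)

/-- `d^k` for standard `k`. -/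
def powStd (d : N) : ℕ → N
  | 0 => oneM N
  | k + 1 => mulM (powStd d k) d

/-- The binary sequence of length `n` coded by `j < 2^n`. -/
def binOfFin {n : ℕ} (j : Fin (2 ^ n)) : Fin n → Bool := fun i => j.val.testBit i.val

/-- The code `∑_σ b_σ · d^(rank σ)` of a tuple `(b_σ : σ ∈ 2^n)` of elements below `d`,
in base `d`. -/
def tupleCode (d : N) {n : ℕ} (b : (Fin n → Bool) → N) : N :=
  (List.finRange (2 ^ n)).foldr
    (fun j acc => addM (mulM (b (binOfFin j)) (powStd d j.val)) acc) (zeroM N)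

/-- `b` realizes all formulas in `fmls`. -/
def RealizesAll {n : ℕ} (fmls : Set (CFormula N n)) (b : (Fin n → Bool) → N) : Prop :=
  ∀ φ ∈ fmls, φ.Realize b

/-- The set of codes of tuples realizing `fmls` in `N`; this represents the internal set
`p(N)` of realizations of a condition. -/
def realizationCodes (d : N) {n : ℕ} (fmls : Set (CFormula N n)) : Set N :=
  {e | ∃ b : (Fin n → Bool) → N, RealizesAll fmls b ∧ e = tupleCode d b}

/-- A condition: a finite type `p` of `N` in the variables `(x_σ : σ ∈ 2^{n_p})`
(with parameters from `N`, and no quantifiers over any `x_σ`), such that `p ⊢ x_σ < d`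
(where `d = 2^a`), and such that for some positive rational `r = u/v`, internally in `N`,
`|p(N)| > r · d^(2^{n_p})`. -/
structure Condition (N : Type*) [arith.Structure N] (d : N) : Type _ where
  n : ℕ
  fmls : Set (CFormula N n)
  finite : fmls.Finite
  realizable : ∃ b : (Fin n → Bool) → N, RealizesAll fmls b
  bounded : ∀ b : (Fin n → Bool) → N, RealizesAll fmls b → ∀ σ : Fin n → Bool, ltM (b σ) d
  large : ∃ (u v : ℕ) (c : N), 0 < u ∧ 0 < v ∧
    InternalCard (realizationCodes d fmls) c ∧
    ltM (mulM (numeral N u) (powStd d (2 ^ n))) (mulM (numeral N v) c)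

/-- The `m`-reduct of a formula in the variables `(x_σ : σ ∈ 2^n)`: substitute
`x_{σ↾m}` for `x_σ`. -/
def reduct {n m : ℕ} (h : m ≤ n) (φ : CFormula N n) : CFormula N m :=
  φ.relabel fun σ => fun i => σ (Fin.castLE h i)

/-- The order on conditions: `q ≤ p` iff `n_q ≥ n_p` and `q` contains every
`n_q`-ramification of every formula in `p` (i.e. every formula whose `n_p`-reduct lies
in `p`). -/
def CondLE {d : N} (q p : Condition N d) : Prop :=
  ∃ h : p.n ≤ q.n, ∀ ψ : CFormula N q.n, reduct h ψ ∈ p.fmls → ψ ∈ q.fmls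

/-- Formulas in the variables `(x_f : f ∈ 2^ω)` with constants from `N`. -/
abbrev CFormulaInf (N : Type*) [arith.Structure N] : Type _ :=
  (arith[[N]]).Formula (ℕ → Bool)

/-- The `m`-reduct of a formula in the variables `(x_f : f ∈ 2^ω)`: substitute
`x_{f↾m}` for `x_f`. -/
def reductInf {m : ℕ} (φ : CFormulaInf N) : CFormula N m :=
  φ.relabel fun f => fun i => f i.val

end Arith

namespace Arith

section Definability

theorem vec_pair_apply {M α : Type*} (f g : (α → M) → M) (v : α → M) :
    ![f v, g v] = fun i => (![f, g] : Fin 2 → (α → M) → M) i v := by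
  ext i
  fin_cases i <;> rfl

variable {N : Type*} [arith.Structure N] {α β : Type*}

/-- A predicate on tuples of elements of `N` is definable with parameters. -/
class DefPred (P : (α → N) → Prop) : Prop where
  definable : (Set.univ : Set N).Definable arith {v | P v}

/-- A function from tuples to `N` is definable with parameters. -/
class DefFun (f : (α → N) → N) : Prop where
  definable : (Set.univ : Set N).DefinableFun arith f

theorem DefPred.congr {P Q : (α → N) → Prop} (hP : DefPred P) (h : ∀ v, P v ↔ Q v) : DefPred Q := by
  rwa [show Q = P from funext fun v => propext (h v).symm]

instance DefPred.and {P Q : (α → N) → Prop} [hP : DefPred P] [hQ : DefPred Q] :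
    DefPred fun v => P v ∧ Q v :=
  ⟨hP.definable.inter hQ.definable⟩

instance DefPred.or {P Q : (α → N) → Prop} [hP : DefPred P] [hQ : DefPred Q] :
    DefPred fun v => P v ∨ Q v :=
  ⟨hP.definable.union hQ.definable⟩

instance DefPred.not {P : (α → N) → Prop} [hP : DefPred P] : DefPred fun v => ¬ P v :=
  ⟨hP.definable.compl⟩

instance DefPred.imp {P Q : (α → N) → Prop} [DefPred P] [DefPred Q] :
    DefPred fun v => P v → Q v :=
  DefPred.congr (P := fun v => ¬ P v ∨ Q v) inferInstance fun _ => imp_iff_not_or.symm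

instance DefPred.iff {P Q : (α → N) → Prop} [DefPred P] [DefPred Q] :
    DefPred fun v => P v ↔ Q v :=
  DefPred.congr (P := fun v => (P v → Q v) ∧ (Q v → P v)) inferInstance
    fun _ => iff_iff_implies_and_implies.symm

theorem DefPred.finite_forall {ι : Type*} [Finite ι] {P : ι → (α → N) → Prop}
    (hP : ∀ i, DefPred (P i)) : DefPred fun v => ∀ i, P i v := by
  have := Set.definable_iInter_of_finite fun i => (hP i).definable
  refine ⟨?_⟩
  convert this using 1
  ext v
  simp

theorem DefPred.reindex {P : (α → N) → Prop} (hP : DefPred P) (g : α → β) :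
    DefPred fun v : β → N => P fun a => v (g a) :=
  ⟨hP.definable.preimage_comp g⟩

theorem DefPred.exists_tuple [Finite β] {P : (α → N) → (β → N) → Prop}
    (hP : DefPred fun w : α ⊕ β → N => P (fun a => w (.inl a)) fun b => w (.inr b)) :
    DefPred fun v => ∃ b, P v b :=
  ⟨(hP.definable.exists_of_finite : _)⟩

instance DefPred.ex {P : (α → N) → N → Prop}
    [hP : DefPred fun w : Option α → N => P (fun a => w (some a)) (w none)] :
    DefPred fun v => ∃ x, P v x := by
  have := DefPred.exists_tuple (β := Unit) (P := fun v (b : Unit → N) => P v (b ()))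
    (hP.reindex (fun o : Option α => o.elim (Sum.inr ()) Sum.inl : Option α → α ⊕ Unit))
  exact this.congr fun v => ⟨fun ⟨b, h⟩ => ⟨_, h⟩, fun ⟨x, h⟩ => ⟨fun _ => x, h⟩⟩

instance DefPred.all {P : (α → N) → N → Prop}
    [hP : DefPred fun w : Option α → N => P (fun a => w (some a)) (w none)] :
    DefPred fun v => ∀ x, P v x :=
  DefPred.congr (P := fun v => ¬ ∃ x, ¬ P v x) inferInstance fun v => by simp

theorem DefPred.subst [Finite α] {P : (α → N) → Prop} (hP : DefPred P)
    {f : α → (β → N) → N} (hf : ∀ a, DefFun (f a)) : DefPred fun v => P fun a => f a v :=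
  ⟨Set.Definable.preimage_map (F := fun v a => f a v) (fun a => (hf a).definable) hP.definable⟩

theorem DefFun.subst [Finite α] {F : (α → N) → N} (hF : DefFun F)
    {f : α → (β → N) → N} (hf : ∀ a, DefFun (f a)) : DefFun fun v => F fun a => f a v :=
  ⟨Set.DefinableFun.comp (g := fun v a => f a v) (fun a => (hf a).definable) hF.definable⟩

instance DefFun.var (i : α) : DefFun fun v : α → N => v i := ⟨Set.DefinableFun.proj arith⟩

instance DefFun.const (c : N) : DefFun fun _ : α → N => c :=
  ⟨definableFun_const arith α (Set.mem_univ c)⟩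

instance DefPred.eq {f g : (α → N) → N} [hf : DefFun f] [hg : DefFun g] :
    DefPred fun v => f v = g v :=
  ⟨hf.definable.ofPred_eq hg.definable⟩

/-- A function is definable once the relation characterizing its values is. -/
theorem DefFun.of_rel {f : (α → N) → N} {R : (α → N) → N → Prop}
    (hR : DefPred fun w : Option α → N => R (fun a => w (some a)) (w none))
    (h : ∀ v y, R v y ↔ f v = y) : DefFun f :=
  ⟨(hR.congr fun _ => h _ _).definable⟩

instance DefFun.ite {P : (α → N) → Prop} [DecidablePred P] {f g : (α → N) → N} [hP : DefPred P]
    [hf : DefFun f] [hg : DefFun g] : DefFun fun v => if P v then f v else g v :=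
  ⟨Set.DefinableFun.ite hP.definable hf.definable hg.definable⟩

instance DefFun.addM {f g : (α → N) → N} [hf : DefFun f] [hg : DefFun g] :
    DefFun fun v => addM (f v) (g v) := by
  have h : DefFun fun v : Fin 2 → N => Structure.funMap (L := arith) arithFunc.add v :=
    ⟨Set.DefinableFun.of_empty (Set.DefinableFun.fun_symbol (L := arith) arithFunc.add)⟩
  simpa only [Arith.addM, vec_pair_apply] using
    h.subst (f := ![f, g]) (Fin.forall_fin_two.2 ⟨hf, hg⟩)

instance DefFun.mulM {f g : (α → N) → N} [hf : DefFun f] [hg : DefFun g] :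
    DefFun fun v => mulM (f v) (g v) := by
  have h : DefFun fun v : Fin 2 → N => Structure.funMap (L := arith) arithFunc.mul v :=
    ⟨Set.DefinableFun.of_empty (Set.DefinableFun.fun_symbol (L := arith) arithFunc.mul)⟩
  simpa only [Arith.mulM, vec_pair_apply] using
    h.subst (f := ![f, g]) (Fin.forall_fin_two.2 ⟨hf, hg⟩)

instance DefPred.ltM {f g : (α → N) → N} [hf : DefFun f] [hg : DefFun g] :
    DefPred fun v => ltM (f v) (g v) := by
  have h : DefPred fun v : Fin 2 → N => Structure.RelMap (L := arith) arithRel.lt v := by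
    refine ⟨(Set.empty_definable_iff.2
      ⟨Relations.formula (L := arith) arithRel.lt Term.var, ?_⟩).mono (Set.empty_subset _)⟩
    ext v
    exact (Formula.realize_rel (L := arith) (R := arithRel.lt) (ts := Term.var)).symm
  simpa only [Arith.ltM, vec_pair_apply] using
    h.subst (f := ![f, g]) (Fin.forall_fin_two.2 ⟨hf, hg⟩)

/-- A function `N → N` is definable with parameters. -/
class DefFun₁ (g : N → N) : Prop where
  defFun : DefFun fun v : Unit → N => g (v ())

/-- A subset of `N` is definable with parameters. -/
class DefSet (D : Set N) : Prop where
  defPred : DefPred fun v : Unit → N => v () ∈ D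

instance DefFun₁.app {g : N → N} [hg : DefFun₁ g] {f : (α → N) → N} [hf : DefFun f] :
    DefFun fun v => g (f v) :=
  DefFun.subst hg.defFun (f := fun _ => f) fun _ => hf

instance DefSet.mem {D : Set N} [hD : DefSet D] {f : (α → N) → N} [hf : DefFun f] :
    DefPred fun v => f v ∈ D :=
  DefPred.subst hD.defPred (f := fun _ => f) fun _ => hf

theorem definableFun₁_iff {f : N → N} : DefinableFun₁ f ↔ DefFun₁ f := by
  constructor
  · intro h
    exact ⟨⟨(DefPred.reindex (P := fun v : Fin 2 → N => f (v 0) = v 1) ⟨h⟩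
      ![some (), none]).definable⟩⟩
  · intro h
    exact (inferInstance : DefPred fun v : Fin 2 → N => f (v 0) = v 1).definable

theorem InternalCard.image {D : Set N} {c : N} (hD : InternalCard D c) {g : N → N} [DefFun₁ g]
    (hg : Set.InjOn g D) : InternalCard (g '' D) c := by
  obtain ⟨f, hf, hbij⟩ := hD
  rw [definableFun₁_iff] at hf
  exact ⟨fun x => g (f x), definableFun₁_iff.2 ⟨inferInstance⟩,
    (hg.bijOn_image).comp hbij⟩

theorem DefinableFun.defFun {k : ℕ} {F : (Fin k → N) → N} (hF : DefinableFun F) : DefFun F :=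
  ⟨((DefPred.reindex
    (P := fun v : Fin (k + 1) → N => F (fun i => v i.castSucc) = v (Fin.last k)) ⟨hF⟩
    (Fin.lastCases (motive := fun _ => Option (Fin k)) none some)).congr
      fun w => by simp; rfl).definable⟩

theorem exists_cformula {n : ℕ} {P : ((Fin n → Bool) → N) → Prop} (hP : DefPred P) :
    ∃ φ : CFormula N n, ∀ b, φ.Realize b ↔ P b := by
  obtain ⟨φ, hφ⟩ := Set.definable_iff_exists_formula_sum.1 hP.definable
  refine ⟨BoundedFormula.constantsVarsEquiv.symm
    (φ.relabel (Sum.map (fun x : (Set.univ : Set N) => (x : N)) id)), fun b => ?_⟩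
  rw [Formula.Realize, ← BoundedFormula.realize_constantsVarsEquiv, Equiv.apply_symm_apply,
    ← Formula.Realize, Formula.realize_relabel]
  have := Set.ext_iff.1 hφ b
  simp only [Set.mem_ofPred_eq] at this
  rw [this]
  congr! 1
  ext x
  rcases x with x | x <;> rfl

theorem defPred_realize {n : ℕ} (φ : CFormula N n) :
    DefPred fun b : (Fin n → Bool) → N => φ.Realize b := by
  refine ⟨Set.definable_iff_exists_formula_sum.2
    ⟨Formula.relabel (Sum.map (fun x : N => (⟨x, Set.mem_univ x⟩ : (Set.univ : Set N))) id)
      (BoundedFormula.constantsVarsEquiv φ), ?_⟩⟩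
  ext b
  simp only [Set.mem_ofPred_eq]
  rw [Formula.realize_relabel, Formula.Realize, Formula.Realize,
    ← BoundedFormula.realize_constantsVarsEquiv (M := N)]
  congr! 1
  ext x
  rcases x with x | x <;> rfl

theorem defPred_realizesAll {fmls : Set (CFormula N n)} (hf : fmls.Finite) :
    DefPred (RealizesAll fmls) := by
  have := hf.to_subtype
  exact (DefPred.finite_forall fun φ : fmls => defPred_realize (φ : CFormula N n)).congr
    fun b => by simp [RealizesAll]

end Definability

section Peano

/-- The structure `N` is a model of Peano arithmetic. -/
class PA (N : Type*) [arith.Structure N] : Prop where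
  isPAModel : IsPAModel N

variable {N : Type*} [arith.Structure N] [PA N] {α : Type*}

theorem PA.induction {P : N → Prop} [DefPred fun v : Fin 1 → N => P (v 0)] (zero : P (zeroM N))
    (succ : ∀ x, P x → P (addM x (oneM N))) (x : N) : P x :=
  (PA.isPAModel (N := N)).2.2.2.2.2.2.2.2 {x | P x}
    (DefPred.definable (P := fun v : Fin 1 → N => P (v 0))) zero succ x

theorem addM_zero (x : N) : addM x (zeroM N) = x := PA.isPAModel.1 x

theorem addM_succ (x y : N) : addM x (addM y (oneM N)) = addM (addM x y) (oneM N) :=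
  PA.isPAModel.2.1 x y

theorem mulM_zero (x : N) : mulM x (zeroM N) = zeroM N := PA.isPAModel.2.2.1 x

theorem mulM_succ (x y : N) : mulM x (addM y (oneM N)) = addM (mulM x y) x :=
  PA.isPAModel.2.2.2.1 x y

theorem not_ltM_zero (x : N) : ¬ ltM x (zeroM N) := PA.isPAModel.2.2.2.2.1 x

theorem ltM_succ (x y : N) : ltM x (addM y (oneM N)) ↔ ltM x y ∨ x = y :=
  PA.isPAModel.2.2.2.2.2.1 x y

theorem succ_ne_zeroM (x : N) : addM x (oneM N) ≠ zeroM N := PA.isPAModel.2.2.2.2.2.2.1 x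

theorem succ_injM {x y : N} : addM x (oneM N) = addM y (oneM N) → x = y :=
  PA.isPAModel.2.2.2.2.2.2.2.1 x y

theorem zero_addM (x : N) : addM (zeroM N) x = x :=
  PA.induction (P := fun x => addM (zeroM N) x = x) (addM_zero _)
    (fun x h => by rw [addM_succ, h]) x

theorem addM_assoc (x y z : N) : addM (addM x y) z = addM x (addM y z) :=
  PA.induction (P := fun z => addM (addM x y) z = addM x (addM y z))
    (by rw [addM_zero, addM_zero]) (fun z h => by rw [addM_succ, addM_succ, addM_succ, h]) z

theorem succ_addM (x y : N) : addM (addM x (oneM N)) y = addM (addM x y) (oneM N) :=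
  PA.induction (P := fun y => addM (addM x (oneM N)) y = addM (addM x y) (oneM N))
    (by rw [addM_zero, addM_zero]) (fun y h => by rw [addM_succ, h, addM_succ]) y

theorem addM_comm (x y : N) : addM x y = addM y x :=
  PA.induction (P := fun y => addM x y = addM y x)
    (by rw [addM_zero, zero_addM]) (fun y h => by rw [addM_succ, h, succ_addM]) y

theorem zero_mulM (x : N) : mulM (zeroM N) x = zeroM N :=
  PA.induction (P := fun x => mulM (zeroM N) x = zeroM N) (mulM_zero _)
    (fun x h => by rw [mulM_succ, h, addM_zero]) x

theorem mulM_addM (x y z : N) : mulM x (addM y z) = addM (mulM x y) (mulM x z) :=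
  PA.induction (P := fun z => mulM x (addM y z) = addM (mulM x y) (mulM x z))
    (by rw [addM_zero, mulM_zero, addM_zero])
    (fun z h => by rw [addM_succ, mulM_succ, h, mulM_succ, addM_assoc]) z

theorem addM_mulM (x y z : N) : mulM (addM x y) z = addM (mulM x z) (mulM y z) :=
  PA.induction (P := fun z => mulM (addM x y) z = addM (mulM x z) (mulM y z))
    (by rw [mulM_zero, mulM_zero, mulM_zero, addM_zero])
    (fun z h => by
      rw [mulM_succ, h, mulM_succ, mulM_succ, addM_assoc, addM_assoc, ← addM_assoc (mulM y z),
        addM_comm (mulM y z) x, addM_assoc]) z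

theorem mulM_assoc (x y z : N) : mulM (mulM x y) z = mulM x (mulM y z) :=
  PA.induction (P := fun z => mulM (mulM x y) z = mulM x (mulM y z))
    (by rw [mulM_zero, mulM_zero, mulM_zero])
    (fun z h => by rw [mulM_succ, h, mulM_succ, mulM_addM]) z

theorem mulM_one (x : N) : mulM x (oneM N) = x := by
  rw [← zero_addM (oneM N), mulM_succ, mulM_zero, zero_addM]

theorem one_mulM (x : N) : mulM (oneM N) x = x :=
  PA.induction (P := fun x => mulM (oneM N) x = x) (mulM_zero _)
    (fun x h => by rw [mulM_succ, h]) x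

theorem mulM_comm (x y : N) : mulM x y = mulM y x :=
  PA.induction (P := fun y => mulM x y = mulM y x) (by rw [mulM_zero, zero_mulM])
    (fun y h => by rw [mulM_succ, h, addM_mulM, one_mulM]) y

theorem addM_right_cancel {x y z : N} : addM x z = addM y z → x = y :=
  PA.induction (P := fun z => addM x z = addM y z → x = y)
    (by rw [addM_zero, addM_zero]; exact id)
    (fun z h e => h (succ_injM (by rwa [addM_succ, addM_succ] at e))) z

theorem eq_zero_or_eq_succ (x : N) : x = zeroM N ∨ ∃ y, x = addM y (oneM N) :=
  PA.induction (P := fun x => x = zeroM N ∨ ∃ y, x = addM y (oneM N)) (.inl rfl)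
    (fun x _ => .inr ⟨x, rfl⟩) x

theorem ltM_iff_exists (x y : N) : ltM x y ↔ ∃ z, y = addM x (addM z (oneM N)) :=
  PA.induction (P := fun y => ltM x y ↔ ∃ z, y = addM x (addM z (oneM N)))
    (iff_of_false (not_ltM_zero x) fun ⟨z, h⟩ => succ_ne_zeroM _ ((addM_succ x z).symm.trans h.symm))
    (fun y h => by
      rw [ltM_succ, h]
      constructor
      · rintro (⟨z, rfl⟩ | rfl)
        · exact ⟨addM z (oneM N), by rw [addM_succ x (addM z (oneM N))]⟩
        · exact ⟨zeroM N, by rw [zero_addM]⟩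
      · rintro ⟨z, hz⟩
        rw [addM_succ] at hz
        obtain rfl := succ_injM hz
        rcases eq_zero_or_eq_succ z with rfl | ⟨w, rfl⟩
        · exact .inr (addM_zero x).symm
        · exact .inl ⟨w, rfl⟩) y

theorem leM_iff_exists (x y : N) : leM x y ↔ ∃ z, y = addM x z := by
  rw [leM, ← ltM_succ, ltM_iff_exists]
  refine exists_congr fun z => ?_
  rw [addM_succ]
  exact ⟨succ_injM, fun h => by rw [h]⟩

theorem leM_total (x y : N) : leM x y ∨ leM y x :=
  PA.induction (P := fun y => (ltM x y ∨ x = y) ∨ (ltM y x ∨ y = x))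
    (.inr ((leM_iff_exists _ x).2 ⟨x, (zero_addM x).symm⟩))
    (fun y h => by
      rcases h with h | h | h
      · exact .inl (.inl ((ltM_succ x y).2 h))
      · obtain ⟨z, rfl⟩ := (ltM_iff_exists y x).1 h
        refine .inr ((leM_iff_exists _ _).2 ⟨z, ?_⟩)
        rw [addM_assoc, addM_comm z]
      · exact .inl (.inl ((ltM_succ x y).2 (.inr h.symm)))) y

theorem addM_eq_zero {x y : N} (h : addM x y = zeroM N) : y = zeroM N := by
  rcases eq_zero_or_eq_succ y with rfl | ⟨w, rfl⟩
  · rfl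
  · exact absurd ((addM_succ x w).symm.trans h) (succ_ne_zeroM _)

theorem leM_antisymm {x y : N} (hxy : leM x y) (hyx : leM y x) : x = y := by
  obtain ⟨z, rfl⟩ := (leM_iff_exists _ _).1 hxy
  obtain ⟨w, hw⟩ := (leM_iff_exists _ _).1 hyx
  have : addM w z = zeroM N := by
    refine addM_right_cancel (z := x) ?_
    rw [zero_addM, addM_comm, addM_comm w, ← addM_assoc, ← hw]
  rw [addM_eq_zero this, addM_zero]

theorem ltM_irrefl (x : N) : ¬ ltM x x := by
  rw [ltM_iff_exists]
  rintro ⟨z, h⟩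
  refine succ_ne_zeroM z (addM_right_cancel (z := x) ?_)
  rw [zero_addM, addM_comm, ← h]

noncomputable instance : CommSemiring N where
  add := addM
  zero := zeroM N
  mul := mulM
  one := oneM N
  add_assoc := addM_assoc
  zero_add := zero_addM
  add_zero := addM_zero
  add_comm := addM_comm
  left_distrib := mulM_addM
  right_distrib := addM_mulM
  zero_mul := zero_mulM
  mul_zero := mulM_zero
  mul_assoc := mulM_assoc
  one_mul := one_mulM
  mul_one := mulM_one
  mul_comm := mulM_comm
  nsmul := @nsmulRec N ⟨zeroM N⟩ ⟨addM⟩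
  nsmul_zero _ := rfl
  nsmul_succ _ _ := rfl
  npow n x := powStd x n
  npow_zero _ := rfl
  npow_succ _ _ := rfl
  natCast := numeral N
  natCast_zero := rfl
  natCast_succ _ := rfl

noncomputable instance : LinearOrder N where
  le := leM
  lt := ltM
  le_refl x := .inr rfl
  le_trans x y z hxy hyz := by
    obtain ⟨u, rfl⟩ := (leM_iff_exists _ _).1 hxy
    obtain ⟨v, rfl⟩ := (leM_iff_exists _ _).1 hyz
    exact (leM_iff_exists _ _).2 ⟨addM u v, addM_assoc _ _ _⟩
  le_antisymm _ _ := leM_antisymm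
  le_total := leM_total
  lt_iff_le_not_ge x y := by
    constructor
    · intro h
      refine ⟨.inl h, fun h' => ltM_irrefl x ?_⟩
      rwa [← leM_antisymm (.inl h) h'] at h
    · rintro ⟨h | rfl, h'⟩
      · exact h
      · exact absurd (.inr rfl) h'
  toDecidableLE := Classical.decRel _

theorem le_iff_exists_eq_add (x y : N) : x ≤ y ↔ ∃ z, y = x + z := leM_iff_exists x y

theorem addM_eq (x y : N) : addM x y = x + y := rfl
theorem mulM_eq (x y : N) : mulM x y = x * y := rfl
theorem zeroM_eq : zeroM N = 0 := rfl
theorem oneM_eq : oneM N = 1 := rfl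
theorem ltM_iff (x y : N) : ltM x y ↔ x < y := Iff.rfl
theorem numeral_eq (n : ℕ) : numeral N n = (n : N) := rfl

theorem powStd_eq (d : N) (n : ℕ) : powStd d n = d ^ n := rfl

instance : IsOrderedCancelAddMonoid N where
  add_le_add_left x y h z := by
    obtain ⟨u, rfl⟩ := (le_iff_exists_eq_add _ _).1 h
    exact (le_iff_exists_eq_add _ _).2 ⟨u, by ring⟩
  le_of_add_le_add_left x y z h := by
    obtain ⟨u, hu⟩ := (le_iff_exists_eq_add _ _).1 h
    refine (le_iff_exists_eq_add _ _).2 ⟨u, addM_right_cancel (z := x) ?_⟩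
    rw [addM_eq, addM_eq, add_comm, hu]
    ring

instance : Nontrivial N := ⟨⟨0, 1, fun h => succ_ne_zeroM (0 : N) (by
  rw [addM_eq, oneM_eq, zero_add, ← h]; rfl)⟩⟩

instance : CanonicallyOrderedAdd N where
  exists_add_of_le h := (le_iff_exists_eq_add _ _).1 h
  le_self_add _ y := (le_iff_exists_eq_add _ _).2 ⟨y, rfl⟩
  le_add_self _ y := (le_iff_exists_eq_add _ _).2 ⟨y, add_comm _ _⟩

theorem eq_zero_or_eq_add_one (x : N) : x = 0 ∨ ∃ y, x = y + 1 := eq_zero_or_eq_succ x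

instance : NoZeroDivisors N where
  eq_zero_or_eq_zero_of_mul_eq_zero {x y} h := by
    rcases eq_zero_or_eq_add_one x with rfl | ⟨u, rfl⟩
    · exact .inl rfl
    rcases eq_zero_or_eq_add_one y with rfl | ⟨v, rfl⟩
    · exact .inr rfl
    refine absurd ?_ (succ_ne_zeroM (u * v + u + v))
    exact Eq.trans (by rw [addM_eq, oneM_eq]; ring) h

instance : IsStrictOrderedRing N where
  le_of_add_le_add_left _ _ _ := le_of_add_le_add_left
  zero_le_one := zero_le
  mul_lt_mul_of_pos_left x hx y z h := by
    obtain ⟨u, rfl⟩ := exists_add_of_le h.le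
    have hu : u ≠ 0 := by rintro rfl; simp at h
    rw [mul_add]
    exact lt_add_of_pos_right _ (pos_iff_ne_zero.2 (mul_ne_zero hx.ne' hu))
  mul_lt_mul_of_pos_right x hx y z h := by
    obtain ⟨u, rfl⟩ := exists_add_of_le h.le
    have hu : u ≠ 0 := by rintro rfl; simp at h
    rw [add_mul]
    exact lt_add_of_pos_right _ (pos_iff_ne_zero.2 (mul_ne_zero hu hx.ne'))

theorem lt_add_one_iff {x y : N} : x < y + 1 ↔ x ≤ y := ltM_succ x y

theorem add_one_le_iff {x y : N} : x + 1 ≤ y ↔ x < y := by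
  rw [← lt_add_one_iff, add_lt_add_iff_right]

/-- Induction for definable predicates. -/
theorem def_induction {P : N → Prop} [DefPred fun v : Fin 1 → N => P (v 0)] (zero : P 0)
    (succ : ∀ x, P x → P (x + 1)) (x : N) : P x :=
  PA.induction zero succ x

instance DefFun.add {f g : (α → N) → N} [DefFun f] [DefFun g] : DefFun fun v => f v + g v :=
  DefFun.addM

instance DefFun.mul {f g : (α → N) → N} [DefFun f] [DefFun g] : DefFun fun v => f v * g v :=
  DefFun.mulM

instance DefPred.lt {f g : (α → N) → N} [DefFun f] [DefFun g] : DefPred fun v => f v < g v :=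
  DefPred.ltM

instance DefPred.le {f g : (α → N) → N} [DefFun f] [DefFun g] : DefPred fun v => f v ≤ g v :=
  DefPred.congr (P := fun v => f v < g v ∨ f v = g v) inferInstance fun _ => le_iff_lt_or_eq.symm

end Peano

section Coding

variable {N : Type*} [arith.Structure N] [PA N] {α : Type*}

theorem exists_div_mod (x : N) {m : N} (hm : 0 < m) : ∃ q r, r < m ∧ x = q * m + r := by
  refine def_induction (P := fun x => ∃ q r, r < m ∧ x = q * m + r) ⟨0, 0, hm, by ring⟩ ?_ x
  rintro x ⟨q, r, hr, rfl⟩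
  rcases (add_one_le_iff.2 hr).lt_or_eq with h | h
  · exact ⟨q, r + 1, h, by ring⟩
  · exact ⟨q + 1, 0, hm, by rw [← h]; ring⟩

theorem le_of_mul_add_le {m q r q' r' : N} (hr' : r' < m) (h : q * m + r ≤ q' * m + r') :
    q ≤ q' := by
  by_contra! hq
  have : (q' + 1) * m ≤ q * m := mul_le_mul_of_nonneg_right (add_one_le_iff.2 hq) zero_le
  refine (h.trans_lt (add_lt_add_right hr' _)).not_ge ?_
  rw [add_one_mul] at this
  exact this.trans le_self_add

theorem div_mod_unique {m q r q' r' : N} (hr : r < m) (hr' : r' < m)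
    (h : q * m + r = q' * m + r') : q = q' ∧ r = r' := by
  obtain rfl := le_antisymm (le_of_mul_add_le hr' h.le) (le_of_mul_add_le hr h.ge)
  exact ⟨rfl, add_left_cancel h⟩

theorem beta_modulus_pos (t i : N) : 0 < 1 + (i + 1) * t :=
  add_pos_of_pos_of_nonneg one_pos zero_le

/-- Gödel's `β` function: the remainder of `s` modulo `1 + (i + 1) * t`. -/
noncomputable def beta (s t i : N) : N :=
  (exists_div_mod s (beta_modulus_pos t i)).choose_spec.choose

theorem beta_eq_iff {s t i y : N} :
    beta s t i = y ↔ y < 1 + (i + 1) * t ∧ ∃ q, s = q * (1 + (i + 1) * t) + y := by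
  have h := (exists_div_mod s (beta_modulus_pos t i)).choose_spec.choose_spec
  constructor
  · rintro rfl
    exact ⟨h.1, _, h.2⟩
  · rintro ⟨hy, q, hq⟩
    exact (div_mod_unique h.1 hy (h.2.symm.trans hq)).2

instance DefFun.beta {f g h : (α → N) → N} [hf : DefFun f] [hg : DefFun g] [hh : DefFun h] :
    DefFun fun v => beta (f v) (g v) (h v) := by
  have : DefFun fun v : Fin 3 → N => Arith.beta (v 0) (v 1) (v 2) :=
    DefFun.of_rel (R := fun v y => y < 1 + (v 2 + 1) * v 1 ∧
      ∃ q, v 0 = q * (1 + (v 2 + 1) * v 1) + y) inferInstance fun _ _ => beta_eq_iff.symm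
  exact this.subst (f := ![f, g, h]) (Fin.forall_fin_succ.2 ⟨hf, Fin.forall_fin_two.2 ⟨hg, hh⟩⟩)

theorem exists_upper_bound (g : N → N) [DefFun₁ g] (n : N) : ∃ B, ∀ i < n, g i ≤ B := by
  refine def_induction (P := fun n => ∃ B, ∀ i, i < n → g i ≤ B)
    ⟨0, fun i hi => absurd hi not_lt_zero⟩ ?_ n
  rintro n ⟨B, hB⟩
  refine ⟨B + g n, fun i hi => ?_⟩
  rcases (lt_add_one_iff.1 hi).lt_or_eq with h | rfl
  · exact (hB i h).trans le_self_add
  · exact le_add_self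

theorem exists_common_multiple (n : N) : ∃ t, 0 < t ∧ ∀ i ≤ n, 0 < i → ∃ r, t = i * r := by
  refine def_induction (P := fun n => ∃ t, 0 < t ∧ ∀ i, i ≤ n → 0 < i → ∃ r, t = i * r)
    ⟨1, one_pos, fun i hi h => absurd hi h.not_ge⟩ ?_ n
  rintro n ⟨t, ht, h⟩
  refine ⟨t * (n + 1), mul_pos ht (add_pos_of_nonneg_of_pos zero_le one_pos), fun i hi hi0 => ?_⟩
  rcases hi.lt_or_eq with hi | rfl
  · obtain ⟨r, rfl⟩ := h i (lt_add_one_iff.1 hi) hi0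
    exact ⟨r * (n + 1), by ring⟩
  · exact ⟨t, by ring⟩

/-- If `e ∣ t`, then `1 + (i + 1) * t` is invertible modulo `1 + (i + e + 1) * t`. -/
theorem beta_modulus_coprime {t i e r : N} (ht : 0 < t) (h : t = e * r) :
    ∃ u v, (1 + (i + 1) * t) * u = (1 + (i + e + 1) * t) * v + 1 := by
  have hk : 0 < (i + e + 1) * t := mul_pos (add_pos_of_nonneg_of_pos zero_le one_pos) ht
  rcases eq_zero_or_eq_add_one ((i + e + 1) * t) with h0 | ⟨k, hk⟩
  · exact absurd h0 hk.ne'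
  refine ⟨(i + e + 1) * (i + e + 1) * r * (k + 1),
    (i + 1) * (i + e + 1) * r * (k + 1) + k, ?_⟩
  have key : (1 + (i + 1) * t) * ((i + e + 1) * (i + e + 1) * r) + 1 =
      (1 + (i + e + 1) * t) * ((i + 1) * (i + e + 1) * r + 1) := by
    rw [h]
    ring
  refine add_right_cancel (b := 1 + (i + e + 1) * t) ?_
  calc _ = ((1 + (i + 1) * t) * ((i + e + 1) * (i + e + 1) * r) + 1) * (k + 1) + 1 := by
        rw [hk]; ring
    _ = _ := by rw [key, hk]; ring

/-- Every definable function restricted to an initial segment is coded by the `β` function. -/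
theorem exists_beta_eq (g : N → N) [DefFun₁ g] (n : N) : ∃ s t, ∀ i < n, beta s t i = g i := by
  obtain ⟨B, hB⟩ := exists_upper_bound g n
  obtain ⟨t₀, ht₀, hdvd⟩ := exists_common_multiple n
  obtain ⟨t, ht⟩ : ∃ t, t = t₀ * (B + 1) := ⟨_, rfl⟩
  have htpos : 0 < t := ht ▸ mul_pos ht₀ (add_pos_of_nonneg_of_pos zero_le one_pos)
  have hBt : B < t := by
    rw [← add_one_le_iff, ht]
    exact le_mul_of_one_le_left zero_le ((add_one_le_iff.2 ht₀).trans' le_add_self)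
  have hgt : ∀ i < n, g i < 1 + (i + 1) * t := fun i hi =>
    calc g i < t := (hB i hi).trans_lt hBt
      _ ≤ (i + 1) * t := le_mul_of_one_le_left zero_le le_add_self
      _ ≤ _ := le_add_self
  have hcop : ∀ i j, i < j → j < n →
      ∃ u v, (1 + (i + 1) * t) * u = (1 + (j + 1) * t) * v + 1 := by
    intro i j hij hj
    obtain ⟨e, rfl⟩ := exists_add_of_le hij.le
    have he : 0 < e := by simpa using hij
    obtain ⟨r, hr⟩ := hdvd e (le_add_self.trans hj.le) he
    exact beta_modulus_coprime htpos (r := r * (B + 1)) (by rw [ht, hr]; ring)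
  suffices H : ∀ m, m ≤ n → ∃ s w, (∀ i, i < m → beta s t i = g i) ∧
      (∀ i, i < m → ∃ r, w = (1 + (i + 1) * t) * r) ∧
      ∀ j, m ≤ j → j < n → ∃ u v, w * u = (1 + (j + 1) * t) * v + 1 by
    obtain ⟨s, w, hs, -⟩ := H n le_rfl
    exact ⟨s, t, hs⟩
  intro m
  refine def_induction (P := fun m => m ≤ n → ∃ s w, (∀ i, i < m → beta s t i = g i) ∧
      (∀ i, i < m → ∃ r, w = (1 + (i + 1) * t) * r) ∧
      ∀ j, m ≤ j → j < n → ∃ u v, w * u = (1 + (j + 1) * t) * v + 1) ?_ ?_ m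
  · exact fun _ => ⟨0, 1, fun i hi => absurd hi not_lt_zero, fun i hi => absurd hi not_lt_zero,
      fun j _ _ => ⟨1, 0, by ring⟩⟩
  intro m ih hm
  have hmn : m < n := add_one_le_iff.1 hm
  obtain ⟨s, w, hs, hw, hc⟩ := ih hmn.le
  obtain ⟨u, v, huv⟩ := hc m le_rfl hmn
  refine ⟨s + w * u * (g m + s * ((m + 1) * t)), w * (1 + (m + 1) * t), ?_, ?_, ?_⟩
  · intro i hi
    rw [beta_eq_iff]
    rcases (lt_add_one_iff.1 hi).lt_or_eq with h | rfl
    · obtain ⟨hlt, q, hq⟩ := beta_eq_iff.1 (hs i h)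
      obtain ⟨r, hr⟩ := hw i h
      refine ⟨hlt, q + r * u * (g m + s * ((m + 1) * t)), ?_⟩
      nth_rewrite 1 [hq]
      rw [hr]
      ring
    · refine ⟨hgt i hmn, s + v * (g i + s * ((i + 1) * t)), ?_⟩
      rw [huv]
      ring
  · intro i hi
    rcases (lt_add_one_iff.1 hi).lt_or_eq with h | rfl
    · obtain ⟨r, hr⟩ := hw i h
      exact ⟨r * (1 + (m + 1) * t), by rw [hr]; ring⟩
    · exact ⟨w, by ring⟩
  · intro j hj hjn
    have hmj : m < j := add_one_le_iff.1 hj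
    obtain ⟨u₁, v₁, h₁⟩ := hc j hmj.le hjn
    obtain ⟨u₂, v₂, h₂⟩ := hcop m j hmj hjn
    refine ⟨u₁ * u₂, v₁ * v₂ * (1 + (j + 1) * t) + v₁ + v₂, ?_⟩
    calc w * (1 + (m + 1) * t) * (u₁ * u₂) = (w * u₁) * ((1 + (m + 1) * t) * u₂) := by ring
      _ = _ := by rw [h₁, h₂]; ring

end Coding

section Cardinality

variable {N : Type*} [arith.Structure N] [PA N]

/-- A definable functional relation is contained in the graph of a definable function. -/
theorem exists_defFun_of_rel {R : N → N → Prop} (hR : DefPred fun v : Fin 2 → N => R (v 0) (v 1))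
    (hfun : ∀ x y z, R x y → R x z → y = z) : ∃ g : N → N, DefFun₁ g ∧ ∀ x y, R x y → g x = y := by
  classical
  let g : N → N := fun x => if h : ∃ y, R x y then h.choose else 0
  have hg : ∀ x y, R x y → g x = y := fun x y h => by
    have hx : ∃ y, R x y := ⟨y, h⟩
    simp only [g, dif_pos hx]
    exact hfun _ _ _ hx.choose_spec h
  refine ⟨g, ⟨?_⟩, hg⟩
  have h₁ : DefPred fun w : Option Unit → N => R (w (some ())) (w none) :=
    hR.reindex ![some (), none]
  have h₂ : DefPred fun w : Option (Option Unit) → N => R (w (some (some ()))) (w none) :=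
    hR.reindex ![some (some ()), none]
  refine DefFun.of_rel (R := fun v y => R (v ()) y ∨ (¬ ∃ z, R (v ()) z) ∧ y = 0)
    inferInstance fun v y => ?_
  constructor
  · rintro (h | ⟨h, rfl⟩)
    · exact hg _ _ h
    · exact dif_neg h
  · rintro rfl
    by_cases h : ∃ z, R (v ()) z
    · obtain ⟨z, hz⟩ := h
      rw [hg _ _ hz]
      exact .inl hz
    · exact .inr ⟨h, dif_neg h⟩

theorem beta_pigeonhole (c : N) : ∀ c' s t : N, (∀ i, i < c → beta s t i < c') →
    (∀ i j, i < c → j < c → beta s t i = beta s t j → i = j) → c ≤ c' := by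
  refine def_induction (P := fun c => ∀ c' s t : N, (∀ i, i < c → beta s t i < c') →
    (∀ i j, i < c → j < c → beta s t i = beta s t j → i = j) → c ≤ c')
    (fun _ _ _ _ _ => zero_le) ?_ c
  intro c ih c' s t hlt hinj
  have hc : c < c + 1 := lt_add_one_iff.2 le_rfl
  rcases eq_zero_or_eq_add_one c' with rfl | ⟨b, rfl⟩
  · exact absurd (hlt c hc) not_lt_zero
  have hg : DefFun₁ fun i : N => if beta s t i = b then beta s t c else beta s t i :=
    ⟨inferInstance⟩
  obtain ⟨s', t', h'⟩ :=
    exists_beta_eq (fun i : N => if beta s t i = b then beta s t c else beta s t i) c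
  have hne : ∀ i < c, beta s t i ≠ beta s t c := fun i hi e =>
    hi.ne (hinj i c (hi.trans hc) hc e)
  refine add_le_add_left (ih b s' t' (fun i hi => ?_) fun i j hi hj e => ?_) 1
  · rw [h' i hi]
    split_ifs with hb
    · exact (lt_add_one_iff.1 (hlt c hc)).lt_of_ne fun e => hne i hi (hb.trans e.symm)
    · exact (lt_add_one_iff.1 (hlt i (hi.trans hc))).lt_of_ne hb
  · rw [h' i hi, h' j hj] at e
    refine hinj i j (hi.trans hc) (hj.trans hc) ?_
    split_ifs at e with hbi hbj hbj
    · exact hbi.trans hbj.symm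
    · exact absurd e.symm (hne j hj)
    · exact absurd e (hne i hi)
    · exact e

theorem pigeonhole {g : N → N} [DefFun₁ g] {c c' : N} (hlt : ∀ i < c, g i < c')
    (hinj : ∀ i < c, ∀ j < c, g i = g j → i = j) : c ≤ c' := by
  obtain ⟨s, t, h⟩ := exists_beta_eq g c
  refine beta_pigeonhole c c' s t (fun i hi => h i hi ▸ hlt i hi) fun i j hi hj e => ?_
  rw [h i hi, h j hj] at e
  exact hinj i hi j hj e

theorem InternalCard.mono {D D' : Set N} {c c' : N} (hD : InternalCard D c)
    (hD' : InternalCard D' c') (h : D ⊆ D') : c ≤ c' := by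
  obtain ⟨f, hf, hbij⟩ := hD
  obtain ⟨f', hf', hbij'⟩ := hD'
  rw [definableFun₁_iff] at hf hf'
  obtain ⟨g, hg, hgf⟩ := exists_defFun_of_rel (R := fun x y => y < c' ∧ f' y = f x)
    inferInstance fun x y z hy hz => hbij'.injOn hy.1 hz.1 (hy.2.trans hz.2.symm)
  have key : ∀ i < c, g i < c' ∧ f' (g i) = f i := by
    intro i hi
    obtain ⟨y, hy, hfy⟩ := hbij'.surjOn (h (hbij.mapsTo hi))
    rw [hgf i y ⟨hy, hfy⟩]
    exact ⟨hy, hfy⟩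
  refine pigeonhole (g := g) (fun i hi => (key i hi).1) fun i hi j hj e => hbij.injOn hi hj ?_
  rw [← (key i hi).2, ← (key j hj).2, e]

theorem internalCard_Iio (c : N) : InternalCard (Set.Iio c) c :=
  ⟨id, definableFun₁_iff.2 ⟨DefFun.var ()⟩, Set.bijOn_id _⟩

theorem InternalCard.union {D D' : Set N} {c c' : N} (hD : InternalCard D c)
    (hD' : InternalCard D' c') (h : Disjoint D D') : InternalCard (D ∪ D') (c + c') := by
  obtain ⟨f, hf, hbij⟩ := hD
  obtain ⟨f', hf', hbij'⟩ := hD'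
  rw [definableFun₁_iff] at hf hf'
  obtain ⟨m, hm, hmc⟩ := exists_defFun_of_rel (R := fun x y => x = c + y)
    inferInstance fun x y z hy hz => add_left_cancel (hy.symm.trans hz)
  have hmc : ∀ y, m (c + y) = y := fun y => hmc _ _ rfl
  refine ⟨fun x => if x < c then f x else f' (m x), definableFun₁_iff.2 ⟨inferInstance⟩,
    ?_, ?_, ?_⟩
  · intro x hx
    by_cases hxc : x < c
    · simp only [if_pos hxc]
      exact .inl (hbij.mapsTo hxc)
    · obtain ⟨y, rfl⟩ := exists_add_of_le (not_lt.1 hxc)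
      simp only [if_neg hxc, hmc]
      exact .inr (hbij'.mapsTo ((add_lt_add_iff_left c).1 hx))
  · intro x hx z hz
    by_cases hxc : x < c <;> by_cases hzc : z < c
    · simp only [if_pos hxc, if_pos hzc]
      exact hbij.injOn hxc hzc
    · obtain ⟨y, rfl⟩ := exists_add_of_le (not_lt.1 hzc)
      simp only [if_pos hxc, if_neg hzc, hmc]
      exact fun e => absurd (e ▸ hbij'.mapsTo ((add_lt_add_iff_left c).1 hz))
        (h.notMem_of_mem_left (hbij.mapsTo hxc))
    · obtain ⟨y, rfl⟩ := exists_add_of_le (not_lt.1 hxc)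
      simp only [if_neg hxc, if_pos hzc, hmc]
      exact fun e => absurd (e ▸ hbij'.mapsTo ((add_lt_add_iff_left c).1 hx))
        (h.notMem_of_mem_left (hbij.mapsTo hzc))
    · obtain ⟨y, rfl⟩ := exists_add_of_le (not_lt.1 hxc)
      obtain ⟨w, rfl⟩ := exists_add_of_le (not_lt.1 hzc)
      simp only [if_neg hxc, if_neg hzc, hmc]
      exact fun e => by rw [hbij'.injOn ((add_lt_add_iff_left c).1 hx)
        ((add_lt_add_iff_left c).1 hz) e]
  · rintro y (hy | hy)
    · obtain ⟨x, hx, rfl⟩ := hbij.surjOn hy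
      exact ⟨x, (lt_of_lt_of_le (show x < c from hx) le_self_add : x < c + c'), if_pos hx⟩
    · obtain ⟨x, hx, rfl⟩ := hbij'.surjOn hy
      refine ⟨c + x, (add_lt_add_iff_left c).2 hx, ?_⟩
      simp [hmc]

theorem exists_beta_enumeration (D : Set N) [DefSet D] (z : N) :
    ∃ c s t, (∀ i, i < c → beta s t i ∈ D ∧ beta s t i < z) ∧
      (∀ i j, i < c → j < c → beta s t i = beta s t j → i = j) ∧
      ∀ x, x ∈ D → x < z → ∃ i, i < c ∧ beta s t i = x := by
  refine def_induction (P := fun z => ∃ c s t, (∀ i, i < c → beta s t i ∈ D ∧ beta s t i < z) ∧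
      (∀ i j, i < c → j < c → beta s t i = beta s t j → i = j) ∧
      ∀ x, x ∈ D → x < z → ∃ i, i < c ∧ beta s t i = x)
    ⟨0, 0, 0, fun i hi => absurd hi not_lt_zero, fun i _ hi => absurd hi not_lt_zero,
      fun x _ hx => absurd hx not_lt_zero⟩ ?_ z
  rintro z ⟨c, s, t, hmem, hinj, hsurj⟩
  have hz : z < z + 1 := lt_add_one_iff.2 le_rfl
  by_cases hzD : z ∈ D
  swap
  · refine ⟨c, s, t, fun i hi => ⟨(hmem i hi).1, (hmem i hi).2.trans hz⟩, hinj, fun x hx hxz => ?_⟩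
    refine hsurj x hx ((lt_add_one_iff.1 hxz).lt_of_ne ?_)
    rintro rfl
    exact hzD hx
  have hg : DefFun₁ fun i : N => if i < c then beta s t i else z := ⟨inferInstance⟩
  obtain ⟨s', t', h'⟩ := exists_beta_eq (fun i : N => if i < c then beta s t i else z) (c + 1)
  have hlt : ∀ i < c, beta s' t' i = beta s t i := fun i hi => by
    rw [h' i (hi.trans (lt_add_one_iff.2 le_rfl)), if_pos hi]
  have hc : beta s' t' c = z := by rw [h' c (lt_add_one_iff.2 le_rfl), if_neg (lt_irrefl c)]
  refine ⟨c + 1, s', t', ?_, ?_, ?_⟩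
  · intro i hi
    rcases (lt_add_one_iff.1 hi).lt_or_eq with hi | rfl
    · rw [hlt i hi]
      exact ⟨(hmem i hi).1, (hmem i hi).2.trans hz⟩
    · rw [hc]
      exact ⟨hzD, hz⟩
  · intro i j hi hj
    rcases (lt_add_one_iff.1 hi).lt_or_eq with hi | rfl <;>
      rcases (lt_add_one_iff.1 hj).lt_or_eq with hj | rfl
    · rw [hlt i hi, hlt j hj]
      exact hinj i j hi hj
    · rw [hlt i hi, hc]
      exact fun e => absurd e (hmem i hi).2.ne
    · rw [hlt j hj, hc]
      exact fun e => absurd e (hmem j hj).2.ne'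
    · exact fun _ => rfl
  · intro x hx hxz
    rcases (lt_add_one_iff.1 hxz).lt_or_eq with hxz | rfl
    · obtain ⟨i, hi, rfl⟩ := hsurj x hx hxz
      exact ⟨i, hi.trans (lt_add_one_iff.2 le_rfl), hlt i hi⟩
    · exact ⟨c, lt_add_one_iff.2 le_rfl, hc⟩

/-- Every bounded definable set has an internal cardinality. -/
theorem exists_internalCard (D : Set N) [DefSet D] {B : N} (hB : ∀ x ∈ D, x < B) :
    ∃ c, InternalCard D c := by
  obtain ⟨c, s, t, hmem, hinj, hsurj⟩ := exists_beta_enumeration D B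
  exact ⟨c, beta s t, definableFun₁_iff.2 ⟨inferInstance⟩, fun i hi => (hmem i hi).1,
    fun i hi j hj => hinj i j hi hj, fun x hx => hsurj x hx (hB x hx)⟩

end Cardinality

section Counting

variable {N : Type*} [arith.Structure N] [PA N]

theorem InternalCard.le_add {E D D' : Set N} [DefSet D] [DefSet D'] {e c c' B : N}
    (hE : InternalCard E e) (hD : InternalCard D c) (hD' : InternalCard D' c')
    (hB : ∀ x ∈ D', x < B) (h : E ⊆ D ∪ D') : e ≤ c + c' := by
  have : DefSet (D' \ D) := ⟨(inferInstance : DefPred fun v : Unit → N => v () ∈ D' ∧ ¬ v () ∈ D)⟩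
  obtain ⟨c'', hc''⟩ := exists_internalCard (D' \ D) fun x hx => hB x hx.1
  calc e ≤ c + c'' := hE.mono (hD.union hc'' Set.disjoint_sdiff_right)
          (by rwa [Set.union_sdiff_self])
    _ ≤ c + c' := by gcongr; exact hc''.mono hD' Set.sdiff_subset

theorem InternalCard.le_sum {D : ℕ → Set N} [∀ i, DefSet (D i)] {c : ℕ → N} {B : N}
    (hD : ∀ i, InternalCard (D i) (c i)) (hB : ∀ i, ∀ x ∈ D i, x < B) (m : ℕ) {E : Set N}
    [DefSet E] {e : N} (hE : InternalCard E e) (hEB : ∀ x ∈ E, x < B)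
    (h : ∀ x ∈ E, ∃ i < m, x ∈ D i) : e ≤ ∑ i ∈ Finset.range m, c i := by
  induction m generalizing E e with
  | zero =>
    refine hE.mono (internalCard_Iio 0) fun x hx => ?_
    obtain ⟨i, hi, -⟩ := h x hx
    exact absurd hi (Nat.not_lt_zero i)
  | succ m ih =>
    have : DefSet (E \ D m) :=
      ⟨(inferInstance : DefPred fun v : Unit → N => v () ∈ E ∧ ¬ v () ∈ D m)⟩
    obtain ⟨e', he'⟩ := exists_internalCard (E \ D m) fun x hx => hEB x hx.1
    rw [Finset.sum_range_succ]
    refine (hE.le_add he' (hD m) (hB m) ?_).trans (add_le_add_left (ih he' (fun x hx => hEB x hx.1) ?_) _)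
    · rw [Set.sdiff_union_self]
      exact Set.subset_union_left
    · rintro x ⟨hx, hxm⟩
      obtain ⟨i, hi, hxi⟩ := h x hx
      refine ⟨i, (Nat.lt_succ_iff.1 hi).lt_of_ne ?_, hxi⟩
      rintro rfl
      exact hxm hxi

/-- If `D` admits `m` definable injections into `{x | x < B}` with disjoint ranges, then
`m · |D| ≤ B`. -/
theorem InternalCard.natCast_mul_le {D : Set N} {c B : N} (hD : InternalCard D c) (g : ℕ → N → N)
    [∀ s, DefFun₁ (g s)] (m : ℕ) (hinj : ∀ s < m, Set.InjOn (g s) D)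
    (hdisj : ∀ s < m, ∀ s' < m, ∀ x ∈ D, ∀ x' ∈ D, g s x = g s' x' → s = s')
    (hB : ∀ s < m, ∀ x ∈ D, g s x < B) : m * c ≤ B := by
  suffices h : ∀ l ≤ m, InternalCard {y | ∃ s < l, y ∈ g s '' D} (l * c) by
    refine (h m le_rfl).mono (internalCard_Iio B) ?_
    rintro _ ⟨s, hs, x, hx, rfl⟩
    exact hB s hs x hx
  intro l hl
  induction l with
  | zero =>
    convert internalCard_Iio (0 : N) using 1
    · ext x
      simp
    · simp
  | succ l ih =>
    have hdis : Disjoint {y | ∃ s < l, y ∈ g s '' D} (g l '' D) := by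
      rw [Set.disjoint_left]
      rintro _ ⟨s, hs, x, hx, rfl⟩ ⟨x', hx', e⟩
      exact hs.ne' (hdisj l hl s (hs.trans hl) x' hx' x hx e)
    convert (ih (Nat.le_of_succ_le hl)).union (hD.image (hinj l hl)) hdis using 1
    · ext y
      simp only [Set.mem_ofPred_eq, Set.mem_union, Nat.lt_succ_iff_lt_or_eq]
      constructor
      · rintro ⟨s, hs | rfl, hy⟩
        exacts [.inl ⟨s, hs, hy⟩, .inr hy]
      · rintro (⟨s, hs, hy⟩ | hy)
        exacts [⟨s, .inl hs, hy⟩, ⟨l, .inr rfl, hy⟩]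
    · push_cast
      ring

end Counting

section Digits

variable {N : Type*} [arith.Structure N] [PA N]

theorem digitB_iff {x : N} {i : ℕ} :
    digitB x i ↔ ∃ u v : N, x = u * 2 ^ (i + 1) + (2 ^ i + v) ∧ v < 2 ^ i := by
  simp only [digitB, numeral_eq, addM_eq, mulM_eq, ltM_iff, Nat.cast_pow, Nat.cast_ofNat]

theorem DefPred.digitB {α : Type*} {f : (α → N) → N} (hf : DefFun f) (i : ℕ) :
    DefPred fun v => digitB (f v) i := by
  have h : DefPred fun v : Unit → N => Arith.digitB (v ()) i := by
    unfold Arith.digitB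
    infer_instance
  exact h.subst fun _ => hf

theorem digitB_mul_add {w r : N} {i : ℕ} (hr : r < 2 ^ i) :
    digitB (w * 2 ^ i + r) i ↔ ∃ u, w = u * 2 + 1 := by
  rw [digitB_iff]
  constructor
  · rintro ⟨u, v, e, hv⟩
    exact ⟨u, (div_mod_unique hr hv (e.trans (by ring))).1⟩
  · rintro ⟨u, rfl⟩
    exact ⟨u, r, by ring, hr⟩

theorem eq_zero_or_one_of_lt_two {x : N} (h : x < 2) : x = 0 ∨ x = 1 := by
  rw [← one_add_one_eq_two, lt_add_one_iff] at h
  rcases h.lt_or_eq with h | h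
  · rw [← zero_add (1 : N), lt_add_one_iff] at h
    exact .inl (le_antisymm h zero_le)
  · exact .inr h

theorem mod_two_eq_one_iff {q u e : N} (he : e < 2) (h : q = u * 2 + e) :
    (∃ w, q = w * 2 + 1) ↔ e = 1 := by
  constructor
  · rintro ⟨w, rfl⟩
    exact (div_mod_unique one_lt_two he h).2.symm
  · rintro rfl
    exact ⟨u, h⟩

/-- Elements with the same first `m` binary digits are congruent modulo `2 ^ m`. -/
theorem exists_mod_eq_of_digitB_iff (x y : N) (m : ℕ)
    (h : ∀ i < m, digitB x i ↔ digitB y i) :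
    ∃ q q' r : N, r < 2 ^ m ∧ x = q * 2 ^ m + r ∧ y = q' * 2 ^ m + r := by
  induction m with
  | zero => exact ⟨x, y, 0, by simp, by simp, by simp⟩
  | succ m ih =>
    obtain ⟨q, q', r, hr, rfl, rfl⟩ := ih fun i hi => h i (hi.trans m.lt_succ_self)
    have hm := h m m.lt_succ_self
    rw [digitB_mul_add hr, digitB_mul_add hr] at hm
    obtain ⟨u, e, he, hq⟩ := exists_div_mod q (zero_lt_two' N)
    obtain ⟨u', e', he', hq'⟩ := exists_div_mod q' (zero_lt_two' N)
    rw [mod_two_eq_one_iff he hq, mod_two_eq_one_iff he' hq'] at hm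
    have hee : e = e' := by
      rcases eq_zero_or_one_of_lt_two he with rfl | rfl <;>
        rcases eq_zero_or_one_of_lt_two he' with rfl | rfl <;> simp_all
    subst hee
    refine ⟨u, u', e * 2 ^ m + r, ?_, by rw [hq]; ring, by rw [hq']; ring⟩
    have he1 : e ≤ 1 := by rwa [← one_add_one_eq_two, lt_add_one_iff] at he
    calc e * 2 ^ m + r < 1 * 2 ^ m + 2 ^ m :=
          add_lt_add_of_le_of_lt (mul_le_mul_left he1 _) hr
      _ = 2 ^ (m + 1) := by ring

theorem natCast_le_of_not_isStd {a : N} (ha : ¬ IsStd a) (m : ℕ) : (m : N) ≤ a := by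
  induction m with
  | zero => simp
  | succ m ih =>
    rw [Nat.cast_succ, add_one_le_iff]
    exact ih.lt_of_ne fun e => ha ⟨m, e.symm⟩

theorem IsPow2.exists_eq_mul {a d : N} (ha : ¬ IsStd a) (hd : IsPow2 a d) (m : ℕ) :
    ∃ w, d = w * 2 ^ m := by
  obtain ⟨f, -, -, hf, rfl⟩ := hd
  have key : ∀ z, z + (m : N) ≤ a → f (z + m) = f z * 2 ^ m := by
    induction m with
    | zero => simp
    | succ m ih =>
      intro z hz
      rw [Nat.cast_succ, ← add_assoc, add_one_le_iff] at hz
      have := hf _ hz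
      simp only [addM_eq, oneM_eq] at this
      rw [Nat.cast_succ, ← add_assoc, this, ih z hz.le]
      ring
  obtain ⟨z, rfl⟩ := exists_add_of_le (natCast_le_of_not_isStd ha m)
  rw [add_comm]
  exact ⟨f z, key z (add_comm z (m : N)).le⟩

end Digits

/-- The set of codes of the tuples satisfying `P`. -/
def codes {N : Type*} [arith.Structure N] {n : ℕ} (d : N) (P : ((Fin n → Bool) → N) → Prop) :
    Set N :=
  {e | ∃ b, P b ∧ e = tupleCode d b}

section TupleCode

variable {N : Type*} [arith.Structure N] [PA N]

theorem sum_mul_pow_lt {d : N} {K : ℕ} (x : Fin K → N) (hx : ∀ j, x j < d) :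
    ∑ j, x j * d ^ (j : ℕ) < d ^ K := by
  induction K with
  | zero => simp
  | succ K ih =>
    rw [Fin.sum_univ_castSucc, pow_succ']
    simp only [Fin.val_castSucc, Fin.val_last]
    calc _ < d ^ K + x (Fin.last K) * d ^ K := add_lt_add_left (ih _ fun j => hx _) _
      _ = (x (Fin.last K) + 1) * d ^ K := by ring
      _ ≤ d * d ^ K := mul_le_mul_left (add_one_le_iff.2 (hx _)) _

theorem sum_mul_pow_injective {d : N} {K : ℕ} (x y : Fin K → N) (hx : ∀ j, x j < d)
    (hy : ∀ j, y j < d) (h : ∑ j, x j * d ^ (j : ℕ) = ∑ j, y j * d ^ (j : ℕ)) : x = y := by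
  induction K with
  | zero => exact Subsingleton.elim _ _
  | succ K ih =>
    rw [Fin.sum_univ_castSucc, Fin.sum_univ_castSucc, add_comm, add_comm (∑ _, _)] at h
    obtain ⟨h₁, h₂⟩ := div_mod_unique (sum_mul_pow_lt _ fun j : Fin K => hx j.castSucc)
      (sum_mul_pow_lt _ fun j : Fin K => hy j.castSucc) h
    have := ih _ _ (fun j => hx j.castSucc) (fun j => hy j.castSucc) h₂
    funext j
    exact Fin.lastCases h₁ (congrFun this) j

theorem binOfFin_surjective (n : ℕ) : Function.Surjective (binOfFin (n := n)) := by
  have hinj : Function.Injective (binOfFin (n := n)) := by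
    intro j j' h
    refine Fin.ext (Nat.eq_of_testBit_eq fun i => ?_)
    rcases lt_or_ge i n with hi | hi
    · exact congrFun h ⟨i, hi⟩
    · have hle := Nat.pow_le_pow_right two_pos hi
      rw [Nat.testBit_lt_two_pow (j.2.trans_le hle), Nat.testBit_lt_two_pow (j'.2.trans_le hle)]
  exact ((Fintype.bijective_iff_injective_and_card _).2 ⟨hinj, by simp⟩).2

variable {n : ℕ}

theorem tupleCode_eq_sum (d : N) (b : (Fin n → Bool) → N) :
    tupleCode d b = ∑ j : Fin (2 ^ n), b (binOfFin j) * d ^ (j : ℕ) := by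
  rw [Fin.sum_univ_def, List.sum_eq_foldr, List.foldr_map]
  simp only [tupleCode, addM_eq, mulM_eq, powStd_eq, zeroM_eq]

theorem tupleCode_lt {d : N} {b : (Fin n → Bool) → N} (hb : ∀ σ, b σ < d) :
    tupleCode d b < d ^ 2 ^ n := by
  rw [tupleCode_eq_sum]
  exact sum_mul_pow_lt _ fun j => hb _

theorem tupleCode_injective {d : N} {b b' : (Fin n → Bool) → N} (hb : ∀ σ, b σ < d)
    (hb' : ∀ σ, b' σ < d) (h : tupleCode d b = tupleCode d b') : b = b' := by
  rw [tupleCode_eq_sum, tupleCode_eq_sum] at h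
  have := sum_mul_pow_injective _ _ (fun j => hb _) (fun j => hb' _) h
  funext σ
  obtain ⟨j, rfl⟩ := binOfFin_surjective n σ
  exact congrFun this j

theorem DefFun.sum {α ι : Type*} (s : Finset ι) {f : ι → (α → N) → N} (hf : ∀ i, DefFun (f i)) :
    DefFun fun v => ∑ i ∈ s, f i v := by
  classical
  induction s using Finset.induction_on with
  | empty => simpa using DefFun.const (α := α) (0 : N)
  | insert i s hi ih =>
    simp only [Finset.sum_insert hi]
    infer_instance

theorem DefFun.tupleCode {α : Type*} (d : N) {f : (Fin n → Bool) → (α → N) → N}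
    (hf : ∀ σ, DefFun (f σ)) : DefFun fun v => tupleCode d fun σ => f σ v := by
  simp only [tupleCode_eq_sum]
  exact DefFun.sum _ fun j => inferInstance

theorem defSet_codes (d : N) {P : ((Fin n → Bool) → N) → Prop} (hP : DefPred P) :
    DefSet (codes d P) := by
  have h₁ : DefPred fun w : Unit ⊕ (Fin n → Bool) → N => P fun σ => w (.inr σ) := hP.reindex _
  have h₂ : DefFun fun w : Unit ⊕ (Fin n → Bool) → N => tupleCode d fun σ => w (.inr σ) :=
    DefFun.tupleCode d fun σ => inferInstance
  exact ⟨DefPred.exists_tuple (P := fun (v : Unit → N) b => P b ∧ v () = tupleCode d b)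
    inferInstance⟩

/-- A definable map between tuples induces a definable map between their codes. -/
theorem exists_defFun_codes (d : N) {G : (Fin n → Bool) → ((Fin n → Bool) → N) → N}
    (hG : ∀ τ, DefFun (G τ)) : ∃ g : N → N, DefFun₁ g ∧
      ∀ b, (∀ σ, b σ < d) → g (tupleCode d b) = tupleCode d fun τ => G τ b := by
  have h₁ : DefPred fun w : Fin 2 ⊕ (Fin n → Bool) → N => ∀ σ, w (.inr σ) < d :=
    DefPred.finite_forall fun σ => inferInstance
  have h₂ : DefFun fun w : Fin 2 ⊕ (Fin n → Bool) → N => tupleCode d fun σ => w (.inr σ) :=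
    DefFun.tupleCode d fun σ => inferInstance
  have h₃ : DefFun fun w : Fin 2 ⊕ (Fin n → Bool) → N =>
      tupleCode d fun τ => G τ fun σ => w (.inr σ) :=
    DefFun.tupleCode d fun τ => (hG τ).subst fun σ => inferInstance
  obtain ⟨g, hg, h⟩ := exists_defFun_of_rel
    (R := fun x y => ∃ b : (Fin n → Bool) → N, (∀ σ, b σ < d) ∧ x = tupleCode d b ∧
      y = tupleCode d fun τ => G τ b) (DefPred.exists_tuple inferInstance) (by
      rintro _ _ _ ⟨b, hb, rfl, rfl⟩ ⟨b', hb', e, rfl⟩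
      rw [tupleCode_injective hb hb' e])
  exact ⟨g, hg, fun b hb => h _ _ ⟨b, hb, rfl, rfl⟩⟩

end TupleCode

section Extension

variable {N : Type*} [arith.Structure N] [PA N] {n : ℕ}

theorem exists_floor (m : N) :
    ∃ g : N → N, DefFun₁ g ∧ ∀ q r, r < m → g (q * m + r) = q * m := by
  obtain ⟨g, hg, h⟩ := exists_defFun_of_rel
    (R := fun x y => ∃ q r, r < m ∧ x = q * m + r ∧ y = q * m) inferInstance (by
      rintro _ _ _ ⟨q, r, hr, rfl, rfl⟩ ⟨q', r', hr', e, rfl⟩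
      rw [(div_mod_unique hr hr' e).1])
  exact ⟨g, hg, fun q r hr => h _ _ ⟨q, r, hr, rfl, rfl⟩⟩

/-- If the coordinates other than `σ` of a tuple satisfying `P` determine the residue modulo `2 ^ m`
of the coordinate `σ`, then at most `d ^ 2 ^ n / 2 ^ m` tuples below `d` satisfy `P`. -/
theorem two_pow_mul_card_le {d w : N} {m : ℕ} (hw : d = w * 2 ^ m) (σ : Fin n → Bool)
    {P : ((Fin n → Bool) → N) → Prop} (hPd : ∀ b, P b → ∀ τ, b τ < d)
    (hP : ∀ b b', P b → P b' → (∀ τ, τ ≠ σ → b τ = b' τ) →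
      ∃ q q' r : N, r < 2 ^ m ∧ b σ = q * 2 ^ m + r ∧ b' σ = q' * 2 ^ m + r)
    {c : N} (hc : InternalCard (codes d P) c) : 2 ^ m * c ≤ d ^ 2 ^ n := by
  have hpos : (0 : N) < 2 ^ m := pow_pos two_pos m
  obtain ⟨fl, hfl, hflq⟩ := exists_floor (2 ^ m : N)
  let G : ℕ → (Fin n → Bool) → ((Fin n → Bool) → N) → N :=
    fun s τ b => if τ = σ then fl (b σ) + s else b τ
  have hG : ∀ s τ, DefFun (G s τ) := fun s τ => by
    by_cases h : τ = σ
    · simp only [G, if_pos h]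
      infer_instance
    · simp only [G, if_neg h]
      infer_instance
  have hlt : ∀ s : ℕ, s < 2 ^ m → (s : N) < 2 ^ m := fun s hs => by exact_mod_cast hs
  have hGd : ∀ s < 2 ^ m, ∀ b, (∀ τ, b τ < d) → ∀ τ, G s τ b < d := by
    intro s hs b hb τ
    by_cases h : τ = σ
    · obtain ⟨q, r, hr, e⟩ := exists_div_mod (b σ) hpos
      simp only [G, if_pos h, e, hflq q r hr]
      have hqw : q < w := by
        refine lt_of_mul_lt_mul_right (a := (2 ^ m : N)) ?_ hpos.le
        rw [← hw]
        exact lt_of_le_of_lt (e ▸ le_self_add) (hb σ)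
      calc q * 2 ^ m + s < q * 2 ^ m + 2 ^ m := by gcongr; exact hlt s hs
        _ = (q + 1) * 2 ^ m := by ring
        _ ≤ w * 2 ^ m := mul_le_mul_left (add_one_le_iff.2 hqw) _
        _ = d := hw.symm
    · simpa only [G, if_neg h] using hb τ
  choose g hg hgG using fun s => exists_defFun_codes d (hG s)
  have hGeq : ∀ s < 2 ^ m, ∀ s' < 2 ^ m, ∀ b b', P b → P b' →
      g s (tupleCode d b) = g s' (tupleCode d b') → ∀ τ, G s τ b = G s' τ b' := by
    intro s hs s' hs' b b' hb hb' e
    rw [hgG s b (hPd b hb), hgG s' b' (hPd b' hb')] at e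
    exact congrFun (tupleCode_injective (hGd s hs b (hPd b hb)) (hGd s' hs' b' (hPd b' hb')) e)
  have key := hc.natCast_mul_le (B := d ^ 2 ^ n) g (2 ^ m) ?_ ?_ ?_
  · exact_mod_cast key
  · rintro s hs _ ⟨b, hb, rfl⟩ _ ⟨b', hb', rfl⟩ e
    have h := hGeq s hs s hs b b' hb hb' e
    have hne : ∀ τ, τ ≠ σ → b τ = b' τ := fun τ hτ => by simpa only [G, if_neg hτ] using h τ
    obtain ⟨q, q', r, hr, hq, hq'⟩ := hP b b' hb hb' hne
    have hσ := h σ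
    simp only [G, if_true, hq, hq', hflq _ r hr] at hσ
    congr 1
    funext τ
    by_cases hτ : τ = σ
    · rw [hτ, hq, hq', add_right_cancel hσ]
    · exact hne τ hτ
  · rintro s hs s' hs' _ ⟨b, hb, rfl⟩ _ ⟨b', hb', rfl⟩ e
    have hσ := hGeq s hs s' hs' b b' hb hb' e σ
    obtain ⟨q, r, hr, hq⟩ := exists_div_mod (b σ) hpos
    obtain ⟨q', r', hr', hq'⟩ := exists_div_mod (b' σ) hpos
    simp only [G, if_true, hq, hq', hflq _ r hr, hflq _ r' hr'] at hσ
    exact_mod_cast (div_mod_unique (hlt s hs) (hlt s' hs') hσ).2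
  · rintro s hs _ ⟨b, hb, rfl⟩
    rw [hgG s b (hPd b hb)]
    exact tupleCode_lt (hGd s hs b (hPd b hb))

/-- The density requirement of a condition, for the set of tuples satisfying `P`. -/
def IsLarge {N : Type*} [arith.Structure N] {n : ℕ} (d : N) (P : ((Fin n → Bool) → N) → Prop) :
    Prop :=
  ∃ (u v : ℕ) (c : N), 0 < u ∧ 0 < v ∧ InternalCard (codes d P) c ∧
    ltM (mulM (numeral N u) (powStd d (2 ^ n))) (mulM (numeral N v) c)

theorem IsLarge.exists_realize {d : N} {P : ((Fin n → Bool) → N) → Prop} (hP : IsLarge d P) :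
    ∃ b, P b := by
  obtain ⟨u, v, c, -, -, ⟨f, -, hf⟩, hlt⟩ := hP
  have hc : 0 < c := pos_of_mul_pos_right (lt_of_le_of_lt zero_le hlt) zero_le
  obtain ⟨b, hb, -⟩ := hf.mapsTo (show (0 : N) ∈ {x | ltM x c} from hc)
  exact ⟨b, hb⟩

/-- A large definable set of tuples has a large subset on which a fixed binary digit of the
coordinate `σ` differs from that of a definable function of the other coordinates. -/
theorem IsLarge.exists_digit_ne {d : N} (hd : ∀ m : ℕ, ∃ w, d = w * 2 ^ m)
    {P : ((Fin n → Bool) → N) → Prop} (hPd : ∀ b, P b → ∀ τ, b τ < d) (hPdef : DefPred P)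
    (hP : IsLarge d P) (σ : Fin n → Bool) {f : ((Fin n → Bool) → N) → N} (hf : DefFun f)
    (hfσ : ∀ b b', (∀ τ, τ ≠ σ → b τ = b' τ) → f b = f b') :
    ∃ i : ℕ, IsLarge d fun b => P b ∧ ¬ (digitB (b σ) i ↔ digitB (f b) i) := by
  obtain ⟨u, v, c, hu, hv, hc, hlt⟩ := hP
  simp only [ltM_iff, mulM_eq, numeral_eq, powStd_eq] at hlt
  obtain ⟨w, hw⟩ := hd (2 * v)
  have hdig : ∀ i, DefPred fun b : (Fin n → Bool) → N => digitB (b σ) i ↔ digitB (f b) i := by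
    intro i
    have h₁ := DefPred.digitB (DefFun.var (N := N) σ) i
    have h₂ := DefPred.digitB hf i
    infer_instance
  let A : ((Fin n → Bool) → N) → Prop := fun b =>
    P b ∧ ∀ i : Fin (2 * v), digitB (b σ) i ↔ digitB (f b) i
  let X : ℕ → ((Fin n → Bool) → N) → Prop := fun i b =>
    P b ∧ ¬ (digitB (b σ) i ↔ digitB (f b) i)
  have hall := DefPred.finite_forall fun i : Fin (2 * v) => hdig i
  have hA : DefSet (codes d A) := defSet_codes d inferInstance
  have hX : ∀ i, DefSet (codes d (X i)) := fun i => by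
    have := hdig i
    exact defSet_codes d inferInstance
  have hR : DefSet (codes d fun b => P b ∧ ¬ ∀ i : Fin (2 * v), digitB (b σ) i ↔ digitB (f b) i) :=
    defSet_codes d inferInstance
  have hbd : ∀ Q : ((Fin n → Bool) → N) → Prop, (∀ b, Q b → P b) →
      ∀ x ∈ codes d Q, x < d ^ 2 ^ n := by
    rintro Q hQ _ ⟨b, hb, rfl⟩
    exact tupleCode_lt (hPd b (hQ b hb))
  obtain ⟨cA, hcA⟩ := exists_internalCard (codes d A) (hbd A fun b h => h.1)
  choose cX hcX using fun i => exists_internalCard (codes d (X i)) (hbd (X i) fun b h => h.1)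
  obtain ⟨cR, hcR⟩ := exists_internalCard _ (hbd
    (fun b => P b ∧ ¬ ∀ i : Fin (2 * v), digitB (b σ) i ↔ digitB (f b) i) fun b h => h.1)
  have hle₁ : c ≤ cA + cR := by
    refine hc.le_add hcA hcR (hbd _ fun b h => h.1) ?_
    rintro _ ⟨b, hb, rfl⟩
    by_cases h : ∀ i : Fin (2 * v), digitB (b σ) i ↔ digitB (f b) i
    · exact .inl ⟨b, ⟨hb, h⟩, rfl⟩
    · exact .inr ⟨b, ⟨hb, h⟩, rfl⟩
  have hle₂ : cR ≤ ∑ i ∈ Finset.range (2 * v), cX i := by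
    refine InternalCard.le_sum hcX (fun i => hbd _ fun b h => h.1) (2 * v) hcR
      (hbd _ fun b h => h.1) ?_
    rintro _ ⟨b, ⟨hb, h⟩, rfl⟩
    obtain ⟨i, hi⟩ := not_forall.1 h
    exact ⟨i, i.2, b, ⟨hb, hi⟩, rfl⟩
  have hle₃ : 2 ^ (2 * v) * cA ≤ d ^ 2 ^ n := by
    refine two_pow_mul_card_le hw σ (fun b h => hPd b h.1) ?_ hcA
    rintro b b' ⟨-, hb⟩ ⟨-, hb'⟩ hne
    refine exists_mod_eq_of_digitB_iff _ _ _ fun i hi => ?_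
    rw [hb ⟨i, hi⟩, hb' ⟨i, hi⟩, hfσ b b' hne]
  have hle₄ : ((2 * v : ℕ) : N) * cA ≤ u * d ^ 2 ^ n := by
    have h₁ : ((2 * v : ℕ) : N) ≤ 2 ^ (2 * v) := by exact_mod_cast Nat.lt_two_pow_self.le
    have h₂ : (1 : N) ≤ u := by exact_mod_cast hu
    calc ((2 * v : ℕ) : N) * cA ≤ 2 ^ (2 * v) * cA := mul_le_mul_left h₁ _
      _ ≤ 1 * d ^ 2 ^ n := by rwa [one_mul]
      _ ≤ u * d ^ 2 ^ n := mul_le_mul_left h₂ _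
  by_contra hno
  have hle₅ : ∀ i, ((2 * v * (2 * v) : ℕ) : N) * cX i ≤ u * d ^ 2 ^ n := fun i => by
    by_contra! hlt'
    exact hno ⟨i, u, 2 * v * (2 * v), cX i, hu, by positivity, hcX i, hlt'⟩
  have hmul : ((2 * v * (2 * v) : ℕ) : N) * c ≤ ((2 * (2 * v) : ℕ) : N) * (u * d ^ 2 ^ n) :=
    calc ((2 * v * (2 * v) : ℕ) : N) * c
        ≤ ((2 * v * (2 * v) : ℕ) : N) * (cA + ∑ i ∈ Finset.range (2 * v), cX i) := by
          gcongr
          exact hle₁.trans (by gcongr)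
      _ = ((2 * v : ℕ) : N) * (((2 * v : ℕ) : N) * cA) +
          ∑ i ∈ Finset.range (2 * v), ((2 * v * (2 * v) : ℕ) : N) * cX i := by
          rw [mul_add, Finset.mul_sum]
          push_cast
          ring
      _ ≤ ((2 * v : ℕ) : N) * (u * d ^ 2 ^ n) +
          ∑ i ∈ Finset.range (2 * v), (u * d ^ 2 ^ n) := by
          exact add_le_add (mul_le_mul_right hle₄ _) (Finset.sum_le_sum fun i _ => hle₅ i)
      _ = ((2 * (2 * v) : ℕ) : N) * (u * d ^ 2 ^ n) := by
          rw [Finset.sum_const, Finset.card_range, nsmul_eq_mul]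
          push_cast
          ring
  refine hmul.not_gt ?_
  calc ((2 * (2 * v) : ℕ) : N) * (u * d ^ 2 ^ n) < ((2 * (2 * v) : ℕ) : N) * (v * c) := by
        have : (0 : N) < ((2 * (2 * v) : ℕ) : N) := by exact_mod_cast (by positivity)
        gcongr
    _ = ((2 * v * (2 * v) : ℕ) : N) * c := by
        push_cast
        ring

end Extension

section Conditions

variable {N : Type*} [arith.Structure N]

theorem realizesAll_insert {n : ℕ} {φ : CFormula N n} {fmls : Set (CFormula N n)}
    {b : (Fin n → Bool) → N} :
    RealizesAll (insert φ fmls) b ↔ RealizesAll fmls b ∧ φ.Realize b := by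
  simp [RealizesAll, and_comm]

theorem reduct_refl {n : ℕ} (φ : CFormula N n) : reduct le_rfl φ = φ := by
  have h := BoundedFormula.relabel_sumInl φ
  rwa [BoundedFormula.castLE_rfl] at h

/-- Finitely many definable predicates that can be decided densely below every set of formulas can
be decided simultaneously. -/
theorem exists_extension [PA N] {d : N} {n : ℕ} {ι : Type*} (s : Finset ι)
    (Q : ι → ℕ → ((Fin n → Bool) → N) → Prop) (hQ : ∀ t i, DefPred (Q t i))
    (h : ∀ t ∈ s, ∀ P, DefPred P → (∀ b, P b → ∀ τ, b τ < d) → IsLarge d P →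
      ∃ i, IsLarge d fun b => P b ∧ Q t i b)
    (fmls : Set (CFormula N n)) (hfin : fmls.Finite)
    (hbd : ∀ b, RealizesAll fmls b → ∀ τ, b τ < d) (hlarge : IsLarge d (RealizesAll fmls)) :
    ∃ fmls' : Set (CFormula N n), fmls ⊆ fmls' ∧ fmls'.Finite ∧
      IsLarge d (RealizesAll fmls') ∧
      ∀ t ∈ s, ∃ i, ∀ b, RealizesAll fmls' b → Q t i b := by
  classical
  induction s using Finset.induction_on with
  | empty => exact ⟨fmls, subset_rfl, hfin, hlarge, by simp⟩
  | insert t s _ ih =>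
    obtain ⟨fmls', hsub, hfin', hlarge', hs⟩ := ih fun t' ht' => h t' (Finset.mem_insert_of_mem ht')
    obtain ⟨i, hi⟩ := h t (Finset.mem_insert_self t s) (RealizesAll fmls')
      (defPred_realizesAll hfin') (fun b hb => hbd b fun φ hφ => hb φ (hsub hφ)) hlarge'
    obtain ⟨φ, hφ⟩ := exists_cformula (hQ t i)
    refine ⟨insert φ fmls', hsub.trans (Set.subset_insert _ _), hfin'.insert φ, ?_, ?_⟩
    · convert hi using 2 with b
      rw [realizesAll_insert, hφ]
    · intro t' ht'
      rcases Finset.mem_insert.1 ht' with rfl | ht'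
      · exact ⟨i, fun b hb => (hφ b).1 (realizesAll_insert.1 hb).2⟩
      · obtain ⟨j, hj⟩ := hs t' ht'
        exact ⟨j, fun b hb => hj b (realizesAll_insert.1 hb).1⟩

end Conditions
end Arith

open Arith in
/-- For every condition `p` and every `N`-definable `F : N^k → N` there is a condition
`q ≤ p` with `n_q = n_p` such that for every tuple `(σ, σ₁, …, σ_k)` from `2^{n_q}` with
`σ ∉ {σ₁, …, σ_k}` there is an `i < ω` with `q ⊢ (x_σ)_i ≠ (F(x_{σ₁}, …, x_{σ_k}))_i`. -/
theorem statement_9 (N : Type*) [arith.Structure N] (hN : NonstandardModel N)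
    (hNc : Countable N) (a d : N) (ha : ¬ IsStd a) (hd : IsPow2 a d)
    (p : Condition N d) (k : ℕ) (F : (Fin k → N) → N) (hF : DefinableFun F) :
    ∃ q : Condition N d, CondLE q p ∧ q.n = p.n ∧
      ∀ (σ : Fin q.n → Bool) (σs : Fin k → Fin q.n → Bool), (∀ j, σ ≠ σs j) →
        ∃ i : ℕ, ∀ b : (Fin q.n → Bool) → N, RealizesAll q.fmls b →
          ¬ (digitB (b σ) i ↔ digitB (F fun j => b (σs j)) i) := by
  classical
  have : PA N := ⟨hN.1⟩
  have hFs : ∀ σs : Fin k → Fin p.n → Bool,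
      DefFun fun b : (Fin p.n → Bool) → N => F fun j => b (σs j) :=
    fun σs => hF.defFun.subst fun j => inferInstance
  obtain ⟨fmls, hsub, hfin, hlarge, h⟩ := exists_extension
    (Finset.univ.filter fun t : (Fin p.n → Bool) × (Fin k → Fin p.n → Bool) => ∀ j, t.1 ≠ t.2 j)
    (fun t i b => ¬ (digitB (b t.1) i ↔ digitB (F fun j => b (t.2 j)) i))
    (fun t i => by
      have h₁ := DefPred.digitB (DefFun.var (N := N) t.1) i
      have h₂ := DefPred.digitB (hFs t.2) i
      infer_instance)
    (fun t ht P hP hPd hlarge => hlarge.exists_digit_ne (fun m => hd.exists_eq_mul ha m) hPd hP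
      t.1 (hFs t.2) fun b b' hbb' => by
        congr 1
        funext j
        exact hbb' _ ((Finset.mem_filter.1 ht).2 j).symm)
    p.fmls p.finite p.bounded p.large
  refine ⟨⟨p.n, fmls, hfin, hlarge.exists_realize,
    fun b hb => p.bounded b fun φ hφ => hb φ (hsub hφ), hlarge⟩, ⟨le_rfl, fun ψ hψ => hsub ?_⟩, rfl,
    fun σ σs hσ => h (σ, σs) (by simpa using hσ)⟩
  rwa [reduct_refl] at hψ
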